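/- Let n ≥ 1 be an integer and let B be the open unit ball of ℝⁿ with Lebesgue measure. There exists a constant C > 0, depending only on n, such that for every Young function φ and every measurable function u : ℝⁿ → [0,∞] vanishing outside B, the function Tu defined on B by Tu(y) = ∫_B ‖z − y‖^{1−n} u(z) dz satisfies ‖Tu‖_{L^φ(B)} ≤ C·‖u‖_{L^φ(B)}, where ‖·‖_{L^φ(B)} denotes the Luxembourg norm with respect to Lebesgue measure on B. -/

import Mathlib

open MeasureTheory
open scoped ENNReal

/-- A Young function: even, convex, nonnegative, and vanishing exactly at `0`. -/
def IsYoung (φ : ℝ → ℝ) : Prop :=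
  (∀ t, φ (-t) = φ t) ∧ ConvexOn ℝ Set.univ φ ∧ (∀ t, 0 ≤ φ t) ∧ (∀ t, φ t = 0 ↔ t = 0)

/-- The Luxembourg norm of a `[0,∞]`-valued function:
`‖f‖_{L^φ} = inf {γ > 0 : ∫ φ(f/γ) dμ ≤ 1}` (with `inf ∅ = ∞`, and where
`φ(f(z)/γ) = ∞` whenever `f(z) = ∞`). -/
noncomputable def luxNormENN {Z : Type*} [MeasurableSpace Z] (μ : Measure Z) (φ : ℝ → ℝ)
    (f : Z → ℝ≥0∞) : ℝ≥0∞ :=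
  sInf (ENNReal.ofReal ''
    {γ : ℝ | 0 < γ ∧
      ∫⁻ z, (if f z = ⊤ then ⊤ else ENNReal.ofReal (φ ((f z).toReal / γ))) ∂μ ≤ 1})

/-!
A Young function, extended by `∞` at `∞`, is on `[0,∞]` the supremum of the affine functions
`t ↦ a t - b` with `a, b ≥ 0` lying below it. Integrating these minorants against a weight of total
mass at most `1` gives Jensen's inequality for sub-probability weights, with no integrability
condition. Tonelli's theorem then yields a Schur test: a kernel whose integrals in each variable are
at most `C` maps `L^φ` to `L^φ` with norm at most `C`, uniformly in `φ`. The Riesz kernel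
`‖z - y‖ ^ s`, `s > -dim E`, satisfies this on a bounded set, because the integral of `‖w‖ ^ s` over
a ball is finite and invariant under translation.
-/

/-- The extension of a Young function `φ` to `[0,∞]` by `φ(∞) = ∞`, so that the integral in the
definition of the Luxembourg norm becomes the modular `∫⁻ z, youngENN φ (f z / γ) ∂μ`. -/
noncomputable def youngENN (φ : ℝ → ℝ) (x : ℝ≥0∞) : ℝ≥0∞ :=
  if x = ⊤ then ⊤ else ENNReal.ofReal (φ x.toReal)

section LuxNorm

variable {X Y : Type*} [MeasurableSpace X] [MeasurableSpace Y] {μ : Measure X} {ν : Measure Y}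
  {φ : ℝ → ℝ}

lemma youngENN_div_ofReal (φ : ℝ → ℝ) {γ : ℝ} (hγ : 0 < γ) (x : ℝ≥0∞) :
    youngENN φ (x / ENNReal.ofReal γ) =
      if x = ⊤ then ⊤ else ENNReal.ofReal (φ (x.toReal / γ)) := by
  by_cases hx : x = ⊤
  · simp [youngENN, hx, ENNReal.top_div]
  · simp [youngENN, hx, ENNReal.div_eq_top, hγ, ENNReal.toReal_div, ENNReal.toReal_ofReal hγ.le]

lemma measurable_youngENN (hφ : Measurable φ) : Measurable (youngENN φ) :=
  Measurable.ite (measurableSet_singleton _) measurable_const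
    (hφ.comp ENNReal.measurable_toReal).ennreal_ofReal

lemma ofReal_mul_le_youngENN_add {a b : ℝ} (ha : 0 ≤ a) (h : ∀ t, a * t ≤ φ t + b) (t : ℝ≥0∞) :
    ENNReal.ofReal a * t ≤ youngENN φ t + ENNReal.ofReal b := by
  induction t with
  | top => simp [youngENN]
  | coe t =>
    rw [youngENN, if_neg ENNReal.coe_ne_top, ← ENNReal.ofReal_coe_nnreal, ← ENNReal.ofReal_mul ha]
    exact (ENNReal.ofReal_le_ofReal (by simpa using h t)).trans ENNReal.ofReal_add_le

lemma exists_affine_minorant_of_convexOn (hφ : ConvexOn ℝ Set.univ φ) (hφ0 : φ 0 ≤ 0) {x r : ℝ}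
    (hx : 0 < x) (hr : 0 ≤ r) (hrx : r < φ x) :
    ∃ a b : ℝ, 0 ≤ a ∧ 0 ≤ b ∧ (∀ t, a * t ≤ φ t + b) ∧ a * x = r + b := by
  obtain ⟨a, c, hle, heq⟩ := hφ.exists_affine_le_of_lt_real (Set.mem_univ x) hrx isClosed_univ
    (hφ.continuousOn isOpen_univ).lowerSemicontinuousOn
  have hc : c ≤ 0 := by linarith [hle 0 (Set.mem_univ 0)]
  have ha : 0 ≤ a := nonneg_of_mul_nonneg_left (by linarith) hx
  exact ⟨a, -c, ha, by linarith, fun t => by linarith [hle t (Set.mem_univ t)], by linarith⟩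

lemma luxNormENN_eq_sInf (μ : Measure X) (φ : ℝ → ℝ) (f : X → ℝ≥0∞) :
    luxNormENN μ φ f =
      sInf {γ : ℝ≥0∞ | γ ≠ 0 ∧ γ ≠ ⊤ ∧ ∫⁻ x, youngENN φ (f x / γ) ∂μ ≤ 1} := by
  unfold luxNormENN
  congr 1
  ext γ
  constructor
  · rintro ⟨γ, ⟨hγ, hf⟩, rfl⟩
    exact ⟨by simpa using hγ, ENNReal.ofReal_ne_top, by simpa only [youngENN_div_ofReal φ hγ]⟩
  · rintro ⟨hγ0, hγ, hf⟩
    have hγpos : 0 < γ.toReal := ENNReal.toReal_pos hγ0 hγ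
    refine ⟨γ.toReal, ⟨hγpos, ?_⟩, ENNReal.ofReal_toReal hγ⟩
    simpa only [← youngENN_div_ofReal φ hγpos, ENNReal.ofReal_toReal hγ]

lemma luxNormENN_le_const_mul {f : X → ℝ≥0∞} {g : Y → ℝ≥0∞} {c : ℝ≥0∞} (hc0 : c ≠ 0) (hc : c ≠ ⊤)
    (h : ∀ γ ≠ 0, γ ≠ ⊤ →
      ∫⁻ x, youngENN φ (f x / (c * γ)) ∂μ ≤ ∫⁻ y, youngENN φ (g y / γ) ∂ν) :
    luxNormENN μ φ f ≤ c * luxNormENN ν φ g := by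
  rw [luxNormENN_eq_sInf, luxNormENN_eq_sInf, mul_comm, ← ENNReal.div_le_iff hc0 hc]
  refine le_sInf fun γ ⟨hγ0, hγ, hg⟩ => ?_
  rw [ENNReal.div_le_iff hc0 hc, mul_comm]
  exact sInf_le ⟨mul_ne_zero hc0 hγ0, ENNReal.mul_ne_top hc hγ, (h γ hγ0 hγ).trans hg⟩

namespace IsYoung

lemma convexOn (hφ : IsYoung φ) : ConvexOn ℝ Set.univ φ := hφ.2.1

lemma nonneg (hφ : IsYoung φ) (t : ℝ) : 0 ≤ φ t := hφ.2.2.1 t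

lemma eq_zero_iff (hφ : IsYoung φ) {t : ℝ} : φ t = 0 ↔ t = 0 := hφ.2.2.2 t

lemma map_zero (hφ : IsYoung φ) : φ 0 = 0 := hφ.eq_zero_iff.2 rfl

lemma continuous (hφ : IsYoung φ) : Continuous φ :=
  continuousOn_univ.1 (hφ.convexOn.continuousOn isOpen_univ)

lemma exists_affine_minorant_youngENN (hφ : IsYoung φ) {x r : ℝ≥0∞} (hr : r < youngENN φ x) :
    ∃ a b : ℝ≥0∞, a ≠ ⊤ ∧ b ≠ ⊤ ∧ (∀ t, a * t ≤ youngENN φ t + b) ∧ r + b ≤ a * x := by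
  by_cases hx : x = ⊤
  · -- Any minorant of positive slope will do.
    have hφ1 : 0 < φ 1 := (hφ.nonneg 1).lt_of_ne' (hφ.eq_zero_iff.not.2 one_ne_zero)
    obtain ⟨a, b, ha, hb, hle, heq⟩ :=
      exists_affine_minorant_of_convexOn hφ.convexOn hφ.map_zero.le one_pos
        (half_pos hφ1).le (half_lt_self hφ1)
    have hapos : 0 < a := by linarith
    refine ⟨_, _, ENNReal.ofReal_ne_top, ENNReal.ofReal_ne_top,
      ofReal_mul_le_youngENN_add ha hle, ?_⟩
    simp [hx, ENNReal.mul_top, hapos]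
  · rw [youngENN, if_neg hx] at hr
    have hr_top : r ≠ ⊤ := hr.ne_top
    have hrx : r.toReal < φ x.toReal := (ENNReal.lt_ofReal_iff_toReal_lt hr_top).1 hr
    have hxpos : 0 < x.toReal := ENNReal.toReal_nonneg.lt_of_ne' fun h => by
      simp [h, hφ.map_zero] at hr
    obtain ⟨a, b, ha, hb, hle, heq⟩ :=
      exists_affine_minorant_of_convexOn hφ.convexOn hφ.map_zero.le hxpos
        ENNReal.toReal_nonneg hrx
    refine ⟨_, _, ENNReal.ofReal_ne_top, ENNReal.ofReal_ne_top,
      ofReal_mul_le_youngENN_add ha hle, le_of_eq ?_⟩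
    rw [← ENNReal.ofReal_toReal hx, ← ENNReal.ofReal_mul ha, heq,
      ENNReal.ofReal_add ENNReal.toReal_nonneg hb, ENNReal.ofReal_toReal hr_top]

lemma youngENN_lintegral_mul_le (hφ : IsYoung φ) {w : X → ℝ≥0∞} (hw : AEMeasurable w μ)
    (hw_le : ∫⁻ x, w x ∂μ ≤ 1) (u : X → ℝ≥0∞) :
    youngENN φ (∫⁻ x, w x * u x ∂μ) ≤ ∫⁻ x, w x * youngENN φ (u x) ∂μ := by
  refine le_of_forall_lt_imp_le_of_dense fun r hr => ?_
  obtain ⟨a, b, ha, hb, hle, hr_le⟩ := hφ.exists_affine_minorant_youngENN hr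
  refine ENNReal.le_of_add_le_add_right hb ?_
  calc r + b ≤ a * ∫⁻ x, w x * u x ∂μ := hr_le
    _ = ∫⁻ x, w x * (a * u x) ∂μ := by
      simp_rw [← lintegral_const_mul' a _ ha, mul_left_comm]
    _ ≤ ∫⁻ x, w x * (youngENN φ (u x) + b) ∂μ := by gcongr; exact hle _
    _ = ∫⁻ x, w x * youngENN φ (u x) ∂μ + (∫⁻ x, w x ∂μ) * b := by
      simp_rw [mul_add]
      rw [lintegral_add_right' _ (hw.mul_const b), lintegral_mul_const' b _ hb]
    _ ≤ ∫⁻ x, w x * youngENN φ (u x) ∂μ + b := by gcongr; exact mul_le_of_le_one_left' hw_le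

variable [SFinite μ] [SFinite ν]

lemma lintegral_youngENN_kernel_le (hφ : IsYoung φ) {k : X → Y → ℝ≥0∞}
    (hk : Measurable (Function.uncurry k)) (hk_left : ∀ᵐ y ∂ν, ∫⁻ x, k x y ∂μ ≤ 1)
    (hk_right : ∀ᵐ x ∂μ, ∫⁻ y, k x y ∂ν ≤ 1) {u : X → ℝ≥0∞} (hu : AEMeasurable u μ) :
    ∫⁻ y, youngENN φ (∫⁻ x, k x y * u x ∂μ) ∂ν ≤ ∫⁻ x, youngENN φ (u x) ∂μ := by
  have hφu : AEMeasurable (fun x => youngENN φ (u x)) μ :=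
    (measurable_youngENN hφ.continuous.measurable).comp_aemeasurable hu
  calc ∫⁻ y, youngENN φ (∫⁻ x, k x y * u x ∂μ) ∂ν
      ≤ ∫⁻ y, ∫⁻ x, k x y * youngENN φ (u x) ∂μ ∂ν :=
        lintegral_mono_ae <| hk_left.mono fun y hy =>
          hφ.youngENN_lintegral_mul_le hk.of_uncurry_right.aemeasurable hy u
    _ = ∫⁻ x, ∫⁻ y, k x y * youngENN φ (u x) ∂ν ∂μ :=
        (lintegral_lintegral_swap (hk.aemeasurable.mul hφu.comp_fst)).symm
    _ = ∫⁻ x, (∫⁻ y, k x y ∂ν) * youngENN φ (u x) ∂μ :=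
        lintegral_congr fun x => lintegral_mul_const _ hk.of_uncurry_left
    _ ≤ ∫⁻ x, youngENN φ (u x) ∂μ :=
        lintegral_mono_ae <| hk_right.mono fun x hx => mul_le_of_le_one_left' hx

lemma luxNormENN_kernel_le (hφ : IsYoung φ) {k : X → Y → ℝ≥0∞}
    (hk : Measurable (Function.uncurry k)) {c : ℝ≥0∞} (hc0 : c ≠ 0) (hc : c ≠ ⊤)
    (hk_left : ∀ᵐ y ∂ν, ∫⁻ x, k x y ∂μ ≤ c) (hk_right : ∀ᵐ x ∂μ, ∫⁻ y, k x y ∂ν ≤ c)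
    {u : X → ℝ≥0∞} (hu : AEMeasurable u μ) :
    luxNormENN ν φ (fun y => ∫⁻ x, k x y * u x ∂μ) ≤ c * luxNormENN μ φ u := by
  refine luxNormENN_le_const_mul hc0 hc fun γ hγ0 _ => ?_
  have hc_inv : c⁻¹ ≠ ⊤ := ENNReal.inv_ne_top.2 hc0
  have hγ_inv : γ⁻¹ ≠ ⊤ := ENNReal.inv_ne_top.2 hγ0
  have normalize (y : Y) :
      (∫⁻ x, k x y * u x ∂μ) / (c * γ) = ∫⁻ x, k x y / c * (u x / γ) ∂μ := by
    simp_rw [div_eq_mul_inv, ENNReal.mul_inv (.inl hc0) (.inl hc),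
      mul_mul_mul_comm (k _ y), lintegral_mul_const' _ _ (ENNReal.mul_ne_top hc_inv hγ_inv)]
  simp_rw [normalize]
  refine hφ.lintegral_youngENN_kernel_le (hk.div_const c) ?_ ?_ (hu.div_const γ)
  · filter_upwards [hk_left] with y hy
    simp_rw [div_eq_mul_inv, lintegral_mul_const' _ _ hc_inv]
    rwa [← div_eq_mul_inv, ENNReal.div_le_iff hc0 hc, one_mul]
  · filter_upwards [hk_right] with x hx
    simp_rw [div_eq_mul_inv, lintegral_mul_const' _ _ hc_inv]
    rwa [← div_eq_mul_inv, ENNReal.div_le_iff hc0 hc, one_mul]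

end IsYoung

end LuxNorm

section RieszKernel

open Bornology Metric Module

lemma setLIntegral_ball_comp_sub_right {E : Type*} [SeminormedAddCommGroup E] [MeasurableSpace E]
    [BorelSpace E] (μ : Measure E) [μ.IsAddRightInvariant] (f : E → ℝ≥0∞) (y : E) (r : ℝ) :
    ∫⁻ z in ball y r, f (z - y) ∂μ = ∫⁻ w in ball 0 r, f w ∂μ := by
  have hball : ball y r = (· - y) ⁻¹' ball 0 r := by
    ext z
    simp [dist_eq_norm]
  rw [hball, (measurePreserving_sub_right μ y).setLIntegral_comp_preimage_emb
    (measurableEmbedding_subRight y)]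

variable {E : Type*} [NormedAddCommGroup E] [NormedSpace ℝ E] [FiniteDimensional ℝ E]
  [Nontrivial E] [MeasurableSpace E] [BorelSpace E] (μ : Measure E) [μ.IsAddHaarMeasure]
  {s : ℝ}

lemma integrableOn_ball_norm_rpow (hs : -(finrank ℝ E : ℝ) < s) (r : ℝ) :
    IntegrableOn (fun w : E => ‖w‖ ^ s) (ball 0 r) μ := by
  refine integrableOn_ball_of_norm_le_rpow (C := 1) (α := -s) finrank_pos (by linarith)
    (.of_forall fun w => ?_) (measurable_norm.pow_const s).aestronglyMeasurable
  simp [abs_of_nonneg (Real.rpow_nonneg (norm_nonneg w) s)]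

lemma exists_setLIntegral_ball_norm_sub_rpow_le (hs : -(finrank ℝ E : ℝ) < s) (R : ℝ) :
    ∃ C : ℝ, 0 < C ∧ ∀ y ∈ ball (0 : E) R,
      ∫⁻ z in ball 0 R, ENNReal.ofReal (‖z - y‖ ^ s) ∂μ ≤ ENNReal.ofReal C := by
  set K := ∫⁻ w in ball (0 : E) (R + R), ENNReal.ofReal (‖w‖ ^ s) ∂μ
  have hK : K ≠ ⊤ := (integrableOn_ball_norm_rpow μ hs (R + R)).lintegral_lt_top.ne
  refine ⟨K.toReal + 1, by positivity, fun y hy => ?_⟩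
  have hsub : ball 0 R ⊆ ball y (R + R) :=
    ball_subset_ball' (by gcongr; exact (mem_ball'.1 hy).le)
  calc ∫⁻ z in ball 0 R, ENNReal.ofReal (‖z - y‖ ^ s) ∂μ
      ≤ ∫⁻ z in ball y (R + R), ENNReal.ofReal (‖z - y‖ ^ s) ∂μ := lintegral_mono_set hsub
    _ = K := setLIntegral_ball_comp_sub_right μ (fun w => ENNReal.ofReal (‖w‖ ^ s)) y (R + R)
    _ ≤ ENNReal.ofReal (K.toReal + 1) :=
      (ENNReal.ofReal_toReal hK).ge.trans (ENNReal.ofReal_le_ofReal (by linarith))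

theorem riesz_potential_luxNorm_bound_general (hs : -(finrank ℝ E : ℝ) < s) {B : Set E}
    (hB : IsBounded B) :
    ∃ C : ℝ, 0 < C ∧ ∀ φ : ℝ → ℝ, IsYoung φ → ∀ u : E → ℝ≥0∞, AEMeasurable u (μ.restrict B) →
      luxNormENN (μ.restrict B) φ
          (fun y => ∫⁻ z in B, ENNReal.ofReal (‖z - y‖ ^ s) * u z ∂μ) ≤
        ENNReal.ofReal C * luxNormENN (μ.restrict B) φ u := by
  obtain ⟨R, hBR⟩ := hB.subset_ball 0
  obtain ⟨C, hC, hker⟩ := exists_setLIntegral_ball_norm_sub_rpow_le μ hs R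
  have hleft : ∀ᵐ y ∂μ.restrict B,
      ∫⁻ z in B, ENNReal.ofReal (‖z - y‖ ^ s) ∂μ ≤ ENNReal.ofReal C := by
    filter_upwards [ae_restrict_of_ae_restrict_of_subset hBR (ae_restrict_mem measurableSet_ball)]
      with y hy
    exact (lintegral_mono_set hBR).trans (hker y hy)
  have hright : ∀ᵐ z ∂μ.restrict B,
      ∫⁻ y in B, ENNReal.ofReal (‖z - y‖ ^ s) ∂μ ≤ ENNReal.ofReal C := by
    simpa only [norm_sub_rev] using hleft
  exact ⟨C, hC, fun φ hφ u hu => hφ.luxNormENN_kernel_le (by fun_prop) (by simpa using hC)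
    ENNReal.ofReal_ne_top hleft hright hu⟩

end RieszKernel

/-- the Riesz-potential-type operator `Tu(y) = ∫_B ‖z−y‖^{1−n} u(z) dz` on the
unit ball `B ⊆ ℝⁿ` is bounded on `L^φ(B)`, with a constant depending only on `n`
(uniform in the Young function `φ`). -/
theorem riesz_potential_luxNorm_bound (n : ℕ) (hn : 1 ≤ n) :
    ∃ C : ℝ, 0 < C ∧
      ∀ φ : ℝ → ℝ, IsYoung φ →
        ∀ u : EuclideanSpace ℝ (Fin n) → ℝ≥0∞, Measurable u →
          (∀ x ∉ Metric.ball (0 : EuclideanSpace ℝ (Fin n)) 1, u x = 0) →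
          luxNormENN (volume.restrict (Metric.ball (0 : EuclideanSpace ℝ (Fin n)) 1)) φ
              (fun y => ∫⁻ z in Metric.ball (0 : EuclideanSpace ℝ (Fin n)) 1,
                ENNReal.ofReal (‖z - y‖ ^ (1 - (n : ℝ))) * u z) ≤
            ENNReal.ofReal C *
              luxNormENN (volume.restrict (Metric.ball (0 : EuclideanSpace ℝ (Fin n)) 1))
                φ u := by
  have : Nonempty (Fin n) := ⟨⟨0, hn⟩⟩
  obtain ⟨C, hC, hbound⟩ := riesz_potential_luxNorm_bound_general
    (volume : Measure (EuclideanSpace ℝ (Fin n))) (s := 1 - n) (by simp)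
    (B := Metric.ball 0 1) Metric.isBounded_ball
  exact ⟨C, hC, fun φ hφ u hu _ => hbound φ hφ u hu.aemeasurable⟩
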